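/- arXiv:1507.04218 — 2 statements merged into one kernel-verified Lean document; each statement's English description precedes it below -/
import Mathlib

section
/- Let σ, d ≥ 1 be integers and let (α_j)_{j∈ℤ^d} ∈ ℓ¹(ℤ^d, ℂ). Then there exists T > 0 and a unique family (a_j)_{j∈ℤ^d} ∈ C^∞([0,T]; ℓ¹(ℤ^d, ℂ)) solving the resonant system i ȧ_j(t) = Σ_{(k₁,…,k_{2σ+1}) ∈ Res_j} a_{k₁}(t) \overline{a_{k₂}(t)} a_{k₃}(t) ⋯ a_{k_{2σ+1}}(t) with a_j(0) = α_j for every j ∈ ℤ^d, where the sum converges absolutely for each t. -/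
open MeasureTheory Filter Set
open scoped ENNReal NNReal

/-- The resonant set `Res_j` for the nonlinearity `|u|^{2σ}u` on `T^d`:
`(2σ+1)`-tuples `k` of integer vectors with alternating sum `j` and alternating sum
of squared norms `|j|²` (indices are `0`-based, so signs are `(-1)^ℓ`). -/
def resSet (σ d : ℕ) (j : Fin d → ℤ) : Set (Fin (2 * σ + 1) → (Fin d → ℤ)) :=
  {k | (∑ l : Fin (2 * σ + 1), ((-1 : ℤ) ^ (l : ℕ)) • k l) = j ∧
       (∑ l : Fin (2 * σ + 1), ((-1 : ℤ) ^ (l : ℕ)) * ∑ i, (k l i) ^ 2)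
         = ∑ i, (j i) ^ 2}

/-- The product `a_{k₁} \bar a_{k₂} a_{k₃} ⋯ a_{k_{2σ+1}}` (conjugation on the
factors with even `1`-based index, i.e. odd `0`-based index). -/
noncomputable def resProd (σ d : ℕ) (a : (Fin d → ℤ) → ℂ)
    (k : Fin (2 * σ + 1) → (Fin d → ℤ)) : ℂ :=
  ∏ l : Fin (2 * σ + 1),
    (if (l : ℕ) % 2 = 0 then a (k l) else (starRingEnd ℂ) (a (k l)))

/-- Shorthand for the sequence space. -/
noncomputable abbrev RSeq (d : ℕ) := lp (fun _ : Fin d → ℤ => ℂ) 1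

lemma rs_sum_norm_le {d : ℕ} (x : RSeq d) (s : Finset (Fin d → ℤ)) :
    ∑ i ∈ s, ‖x i‖ ≤ ‖x‖ := by
  have := lp.sum_rpow_le_norm_rpow (p := 1) (by simp) x s
  simpa using this

lemma rs_bound {d n : ℕ} (x : Fin n → RSeq d) (s : Finset (Fin n → (Fin d → ℤ))) :
    ∑ k ∈ s, ∏ l, ‖x l (k l)‖ ≤ ∏ l, ‖x l‖ := by
  classical
  calc ∑ k ∈ s, ∏ l, ‖x l (k l)‖
      ≤ ∑ k ∈ Fintype.piFinset (fun l => s.image (fun k => k l)), ∏ l, ‖x l (k l)‖ := by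
        apply Finset.sum_le_sum_of_subset_of_nonneg
        · intro k hk
          rw [Fintype.mem_piFinset]
          intro l
          exact Finset.mem_image_of_mem (fun k => k l) hk
        · intro k _ _
          positivity
    _ = ∏ l, ∑ i ∈ s.image (fun k => k l), ‖x l i‖ := by
        rw [Finset.prod_univ_sum]
    _ ≤ ∏ l, ‖x l‖ := by
        apply Finset.prod_le_prod
        · intro l _
          positivity
        · intro l _
          exact rs_sum_norm_le _ _

lemma rs_summable {d n : ℕ} (x : Fin n → RSeq d) :
    Summable (fun k : Fin n → (Fin d → ℤ) => ∏ l, ‖x l (k l)‖) :=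
  summable_of_sum_le (fun k => by positivity) (rs_bound x)

lemma rs_tsum_le {d n : ℕ} (x : Fin n → RSeq d) :
    ∑' k : Fin n → (Fin d → ℤ), ∏ l, ‖x l (k l)‖ ≤ ∏ l, ‖x l‖ :=
  (rs_summable x).tsum_le_of_sum_le (rs_bound x)

/-- Coordinate functional, conjugated on odd indices. -/
noncomputable def rsCoord (d : ℕ) (l : ℕ) (i : Fin d → ℤ) : RSeq d →ₗ[ℝ] ℂ where
  toFun x := if l % 2 = 0 then x i else (starRingEnd ℂ) (x i)
  map_add' x y := by
    split_ifs <;> simp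
  map_smul' c x := by
    split_ifs <;> simp

lemma rsCoord_norm (d : ℕ) (l : ℕ) (i : Fin d → ℤ) (x : RSeq d) :
    ‖rsCoord d l i x‖ = ‖x i‖ := by
  simp only [rsCoord, LinearMap.coe_mk, AddHom.coe_mk]
  split_ifs <;> simp

/-- The target frequency of a tuple. -/
def rsTarget (σ d : ℕ) (k : Fin (2 * σ + 1) → (Fin d → ℤ)) : Fin d → ℤ :=
  ∑ l : Fin (2 * σ + 1), ((-1 : ℤ) ^ (l : ℕ)) • k l

/-- The product as a multilinear form. -/
noncomputable def rsForm (σ d : ℕ) (k : Fin (2 * σ + 1) → (Fin d → ℤ)) :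
    MultilinearMap ℝ (fun _ : Fin (2 * σ + 1) => RSeq d) ℂ :=
  (MultilinearMap.mkPiAlgebra ℝ (Fin (2 * σ + 1)) ℂ).compLinearMap
    (fun l => rsCoord d l (k l))

lemma rsForm_apply (σ d : ℕ) (k : Fin (2 * σ + 1) → (Fin d → ℤ))
    (x : Fin (2 * σ + 1) → RSeq d) :
    rsForm σ d k x = ∏ l : Fin (2 * σ + 1), rsCoord d l (k l) (x l) := by
  simp [rsForm]

lemma rsForm_diag (σ d : ℕ) (k : Fin (2 * σ + 1) → (Fin d → ℤ)) (x : RSeq d) :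
    rsForm σ d k (fun _ => x) = resProd σ d (fun m => x m) k := by
  rw [rsForm_apply]; rfl

lemma rsForm_norm (σ d : ℕ) (k : Fin (2 * σ + 1) → (Fin d → ℤ))
    (x : Fin (2 * σ + 1) → RSeq d) :
    ‖rsForm σ d k x‖ = ∏ l, ‖x l (k l)‖ := by
  rw [rsForm_apply, norm_prod]
  simp_rw [rsCoord_norm]

open Classical in
/-- One term of the vector field. -/
noncomputable def rsTerm (σ d : ℕ) (k : Fin (2 * σ + 1) → (Fin d → ℤ)) :
    MultilinearMap ℝ (fun _ : Fin (2 * σ + 1) => RSeq d) (RSeq d) :=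
  if k ∈ resSet σ d (rsTarget σ d k) then
    ((lp.lsingle (𝕜 := ℝ) (E := fun _ : Fin d → ℤ => ℂ) 1 (rsTarget σ d k)).comp
      (LinearMap.mulLeft ℝ (-Complex.I))).compMultilinearMap (rsForm σ d k)
  else 0

lemma rsTerm_norm_le (σ d : ℕ) (k : Fin (2 * σ + 1) → (Fin d → ℤ))
    (x : Fin (2 * σ + 1) → RSeq d) :
    ‖rsTerm σ d k x‖ ≤ ∏ l, ‖x l (k l)‖ := by
  unfold rsTerm
  split_ifs
  · rw [← rsForm_norm]
    change ‖lp.single (E := fun _ : Fin d → ℤ => ℂ) 1 (rsTarget σ d k)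
      (-Complex.I * rsForm σ d k x)‖ ≤ _
    rw [lp.norm_single (by simp)]
    simp
  · simp only [zero_apply, norm_zero]
    positivity

lemma rsTerm_coord (σ d : ℕ) (k : Fin (2 * σ + 1) → (Fin d → ℤ))
    (x : Fin (2 * σ + 1) → RSeq d) (j : Fin d → ℤ) :
    (rsTerm σ d k x) j =
      (resSet σ d j).indicator (fun k => -Complex.I * rsForm σ d k x) k := by
  classical
  have key : k ∈ resSet σ d j → rsTarget σ d k = j := fun h => h.1
  unfold rsTerm
  by_cases hk : k ∈ resSet σ d j
  · obtain rfl := key hk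
    rw [Set.indicator_of_mem hk, if_pos hk]
    change lp.single (E := fun _ : Fin d → ℤ => ℂ) 1 (rsTarget σ d k)
      (-Complex.I * rsForm σ d k x) (rsTarget σ d k) = _
    rw [lp.single_apply_self]
  · rw [Set.indicator_of_notMem hk]
    split_ifs with h
    · have hne : j ≠ rsTarget σ d k := by
        rintro rfl
        exact hk h
      change lp.single (E := fun _ : Fin d → ℤ => ℂ) 1 (rsTarget σ d k)
        (-Complex.I * rsForm σ d k x) j = _
      rw [lp.single_apply_ne _ _ _ hne]
    · rfl

lemma rsTerm_summable (σ d : ℕ) (x : Fin (2 * σ + 1) → RSeq d) :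
    Summable (fun k => rsTerm σ d k x) :=
  Summable.of_norm_bounded (rs_summable x) (fun k => rsTerm_norm_le σ d k x)

/-- The vector field as a multilinear map. -/
noncomputable def rsMul (σ d : ℕ) :
    MultilinearMap ℝ (fun _ : Fin (2 * σ + 1) => RSeq d) (RSeq d) where
  toFun x := ∑' k, rsTerm σ d k x
  map_update_add' m i x y := by
    simp only [MultilinearMap.map_update_add]
    exact (rsTerm_summable σ d _).tsum_add (rsTerm_summable σ d _)
  map_update_smul' m i c x := by
    simp only [MultilinearMap.map_update_smul]
    exact (rsTerm_summable σ d _).tsum_const_smul c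

lemma rsMul_norm_le (σ d : ℕ) (x : Fin (2 * σ + 1) → RSeq d) :
    ‖rsMul σ d x‖ ≤ 1 * ∏ l, ‖x l‖ := by
  rw [one_mul]
  refine le_trans ?_ (rs_tsum_le x)
  exact tsum_of_norm_bounded (rs_summable x).hasSum (fun k => rsTerm_norm_le σ d k x)

/-- The vector field as a continuous multilinear map. -/
noncomputable def rsCMul (σ d : ℕ) :
    ContinuousMultilinearMap ℝ (fun _ : Fin (2 * σ + 1) => RSeq d) (RSeq d) :=
  (rsMul σ d).mkContinuous 1 (rsMul_norm_le σ d)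

/-- The vector field. -/
noncomputable def rsField (σ d : ℕ) (x : RSeq d) : RSeq d := rsCMul σ d (fun _ => x)

lemma rsField_contDiff (σ d : ℕ) (n : WithTop ℕ∞) : ContDiff ℝ n (rsField σ d) :=
  (rsCMul σ d).contDiff.comp (contDiff_pi.2 fun _ => contDiff_id)

lemma rsField_coord (σ d : ℕ) (x : RSeq d) (j : Fin d → ℤ) :
    Complex.I * (rsField σ d x) j =
      ∑' k : resSet σ d j, resProd σ d (fun m => x m) ↑k := by
  have h1 : (rsField σ d x) j = ∑' k, (rsTerm σ d k (fun _ => x)) j :=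
    (lp.evalCLM ℝ (fun _ : Fin d → ℤ => ℂ) 1 j).map_tsum (rsTerm_summable σ d (fun _ => x))
  rw [h1]
  simp_rw [rsTerm_coord]
  rw [← tsum_subtype (resSet σ d j) (fun k => -Complex.I * rsForm σ d k (fun _ => x)),
    tsum_mul_left, ← mul_assoc]
  simp [rsForm_diag]

lemma rsProd_summable (σ d : ℕ) (x : RSeq d) (j : Fin d → ℤ) :
    Summable (fun k : resSet σ d j => ‖resProd σ d (fun m => x m) ↑k‖) := by
  simp_rw [← rsForm_diag, rsForm_norm]
  exact (rs_summable (fun _ : Fin (2 * σ + 1) => x)).subtype _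

lemma rsField_lipschitz (σ d : ℕ) (R : ℝ≥0) :
    ∃ K : ℝ≥0, LipschitzOnWith K (rsField σ d) (Metric.closedBall 0 R) := by
  refine ⟨‖rsCMul σ d‖₊ * (2 * σ + 1 : ℕ) * R ^ (2 * σ), ?_⟩
  apply LipschitzOnWith.of_dist_le_mul
  intro x hx y hy
  rw [mem_closedBall_zero_iff] at hx hy
  rw [dist_eq_norm, dist_eq_norm]
  have h := (rsCMul σ d).norm_image_sub_le (fun _ => x) (fun _ => y)
  have e : ((fun _ => x) - (fun _ => y) : Fin (2 * σ + 1) → RSeq d) = fun _ => x - y := rfl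
  rw [e, pi_norm_const, pi_norm_const, pi_norm_const, Fintype.card_fin] at h
  refine h.trans ?_
  push_cast
  gcongr
  · exact max_le hx hy

lemma rs_coord_deriv {d : ℕ} {a : ℝ → RSeq d} {v : RSeq d} {T t : ℝ} (j : Fin d → ℤ)
    (h : HasDerivWithinAt a v (Set.Icc 0 T) t) :
    HasDerivWithinAt (fun s => a s j) (v j) (Set.Icc 0 T) t :=
  (lp.evalCLM ℝ (fun _ : Fin d → ℤ => ℂ) 1 j).hasFDerivAt.comp_hasDerivWithinAt t h

lemma rs_unique (σ d : ℕ) {T : ℝ} {a b : ℝ → RSeq d}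
    (ha : ∀ t ∈ Set.Icc (0 : ℝ) T, HasDerivWithinAt a (rsField σ d (a t)) (Set.Icc 0 T) t)
    (hb : ∀ t ∈ Set.Icc (0 : ℝ) T, HasDerivWithinAt b (rsField σ d (b t)) (Set.Icc 0 T) t)
    (h0 : b 0 = a 0) : ∀ t ∈ Set.Icc (0 : ℝ) T, b t = a t := by
  have hac : ContinuousOn a (Set.Icc 0 T) := fun t ht => (ha t ht).continuousWithinAt
  have hbc : ContinuousOn b (Set.Icc 0 T) := fun t ht => (hb t ht).continuousWithinAt
  obtain ⟨Ra, hRa⟩ := isCompact_Icc.exists_bound_of_continuousOn hac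
  obtain ⟨Rb, hRb⟩ := isCompact_Icc.exists_bound_of_continuousOn hbc
  obtain ⟨K, hK⟩ := rsField_lipschitz σ d (Real.toNNReal (max Ra Rb))
  have conv : ∀ {c : ℝ → RSeq d} {v : RSeq d} {t : ℝ}, t ∈ Set.Ico 0 T →
      HasDerivWithinAt c v (Set.Icc 0 T) t → HasDerivWithinAt c v (Set.Ici t) t := by
    intro c v t ht h
    exact h.mono_of_mem_nhdsWithin (Icc_mem_nhdsGE_of_mem ht)
  refine ODE_solution_unique_of_mem_Icc_right (v := fun _ => rsField σ d)
    (s := fun _ => Metric.closedBall 0 (Real.toNNReal (max Ra Rb))) (K := K)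
    (fun _ _ => hK) hbc (fun t ht => conv ht (hb t (Set.Ico_subset_Icc_self ht))) ?_
    hac (fun t ht => conv ht (ha t (Set.Ico_subset_Icc_self ht))) ?_ h0
  · intro t ht
    rw [mem_closedBall_zero_iff]
    exact (hRb t (Set.Ico_subset_Icc_self ht)).trans
      ((le_max_right _ _).trans (Real.le_coe_toNNReal _))
  · intro t ht
    rw [mem_closedBall_zero_iff]
    exact (hRa t (Set.Ico_subset_Icc_self ht)).trans
      ((le_max_left _ _).trans (Real.le_coe_toNNReal _))

lemma rs_exists (σ d : ℕ) (α : RSeq d) :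
    ∃ T : ℝ, 0 < T ∧ ∃ a : ℝ → RSeq d, a 0 = α ∧
      ∀ t ∈ Set.Icc (0 : ℝ) T, HasDerivWithinAt a (rsField σ d (a t)) (Set.Icc 0 T) t := by
  obtain ⟨ε, hε, A, r, L, K, hr, h⟩ :=
    IsPicardLindelof.of_contDiffAt_one (rsField_contDiff σ d 1).contDiffAt (x₀ := α)
  obtain ⟨a, ha0, ha⟩ := (h 0).exists_eq_forall_mem_Icc_hasDerivWithinAt
    (x := α) (Metric.mem_closedBall_self r.2)
  have hsub : Set.Icc 0 ε ⊆ Set.Icc (0 - ε) (0 + ε) :=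
    Set.Icc_subset_Icc (by linarith) (by linarith)
  exact ⟨ε, hε, a, ha0, fun t ht => (ha t (hsub ht)).mono hsub⟩

/-- **Local existence and uniqueness for the resonant system
(Proposition 5.12 of [CDS10], cf. Lemma 2.3 of [CaFa12]).**
For `(α_j) ∈ ℓ¹(ℤ^d)` there are `T > 0` and a unique
`(a_j) ∈ C^∞([0,T]; ℓ¹(ℤ^d))` with `a_j(0) = α_j` solving
`i ȧ_j = Σ_{(k₁,…,k_{2σ+1}) ∈ Res_j} a_{k₁} \bar a_{k₂} ⋯ a_{k_{2σ+1}}`,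
the sum converging absolutely for each `t`. -/
theorem resonant_system_wellposedness (σ d : ℕ) (hσ : 1 ≤ σ) (hd : 1 ≤ d)
    (α : lp (fun _ : Fin d → ℤ => ℂ) 1) :
    ∃ T : ℝ, 0 < T ∧
      ∃ a : ℝ → lp (fun _ : Fin d → ℤ => ℂ) 1,
        (ContDiffOn ℝ (⊤ : ℕ∞) a (Set.Icc 0 T) ∧ a 0 = α ∧
          ∀ (j : Fin d → ℤ), ∀ t ∈ Set.Icc (0 : ℝ) T,
            Summable (fun k : resSet σ d j => ‖resProd σ d (fun m => a t m) ↑k‖) ∧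
            Complex.I * derivWithin (fun s => a s j) (Set.Icc 0 T) t
              = ∑' k : resSet σ d j, resProd σ d (fun m => a t m) ↑k) ∧
        ∀ b : ℝ → lp (fun _ : Fin d → ℤ => ℂ) 1,
          (ContDiffOn ℝ (⊤ : ℕ∞) b (Set.Icc 0 T) ∧ b 0 = α ∧
            ∀ (j : Fin d → ℤ), ∀ t ∈ Set.Icc (0 : ℝ) T,
              Summable (fun k : resSet σ d j => ‖resProd σ d (fun m => b t m) ↑k‖) ∧
              Complex.I * derivWithin (fun s => b s j) (Set.Icc 0 T) t
                = ∑' k : resSet σ d j, resProd σ d (fun m => b t m) ↑k) →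
          ∀ t ∈ Set.Icc (0 : ℝ) T, b t = a t := by
  obtain ⟨T, hT, a, ha0, ha⟩ := rs_exists σ d α
  refine ⟨T, hT, a, ⟨?_, ha0, ?_⟩, ?_⟩
  · refine ODE.contDiffOn_enat_Icc_of_hasDerivWithinAt (f := fun _ => rsField σ d)
      (u := Set.univ) (n := ⊤) ?_ ha (fun _ _ => Set.mem_univ _)
    exact ((rsField_contDiff σ d _).comp contDiff_snd).contDiffOn
  · intro j t ht
    refine ⟨rsProd_summable σ d (a t) j, ?_⟩
    rw [(rs_coord_deriv j (ha t ht)).derivWithin (uniqueDiffOn_Icc hT t ht)]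
    exact rsField_coord σ d (a t) j
  · rintro b ⟨hbs, hb0, hb⟩
    refine rs_unique σ d ha ?_ (hb0.trans ha0.symm)
    intro t ht
    have hd' : HasDerivWithinAt b (derivWithin b (Set.Icc 0 T) t) (Set.Icc 0 T) t :=
      (hbs.differentiableOn (by simp) t ht).hasDerivWithinAt
    have e : derivWithin b (Set.Icc 0 T) t = rsField σ d (b t) := by
      ext j
      have h := (hb j t ht).2
      rw [(rs_coord_deriv j hd').derivWithin (uniqueDiffOn_Icc hT t ht),
        ← rsField_coord σ d (b t) j] at h
      exact mul_left_cancel₀ Complex.I_ne_zero h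
    rwa [e] at hd'
end

section
/- Let T > 0, ε ∈ (0,1], and let (a_j)_{j∈ℤ} ∈ C([0,T]; ℓ¹(ℤ, ℂ)) with α_j := a_j(0). Then the linear integral system b_j(t) = −i Σ_{(k,ℓ,m) ∈ Res_j} ∫_0^t (a_k \bar{a}_ℓ b_m + a_k \bar{b}_ℓ a_m + b_k \bar{a}_ℓ a_m)(τ) dτ − Σ_{k−ℓ+m=j, k²−ℓ²+m² ≠ j²} (2/(j²−k²+ℓ²−m²)) [ (a_k \bar{a}_ℓ a_m)(t) e^{i(j²−k²+ℓ²−m²) t/(2ε)} − α_k \bar{α}_ℓ α_m ] (j ∈ ℤ) has a unique solution (b_j^ε)_{j∈ℤ} ∈ C([0,T]; ℓ¹(ℤ, ℂ)). Moreover, sup_{ε∈(0,1]} ‖(b_j^ε)‖_{L^∞([0,T]; ℓ¹)} < ∞, i.e., the solutions are bounded in C([0,T]; ℓ¹) uniformly in ε. -/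
open MeasureTheory Filter Set
open scoped ENNReal NNReal

/-- The one-dimensional cubic resonant set
`Res_j = {(k,ℓ,m) ∈ ℤ³ : k − ℓ + m = j, k² − ℓ² + m² = j²}`. -/
def res1 (j : ℤ) : Set (ℤ × ℤ × ℤ) :=
  {p | p.1 - p.2.1 + p.2.2 = j ∧ p.1 ^ 2 - p.2.1 ^ 2 + p.2.2 ^ 2 = j ^ 2}

/-- The non-resonant triples: `k − ℓ + m = j` but `k² − ℓ² + m² ≠ j²`. -/
def nonres1 (j : ℤ) : Set (ℤ × ℤ × ℤ) :=
  {p | p.1 - p.2.1 + p.2.2 = j ∧ p.1 ^ 2 - p.2.1 ^ 2 + p.2.2 ^ 2 ≠ j ^ 2}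

/-- `b` solves the linear corrector system (with data `a` and parameter `ε`) on
`[0,T]`, both sums being required to converge absolutely:
`b_j(t) = −i Σ_{(k,ℓ,m)∈Res_j} ∫_0^t (a_k \bar a_ℓ b_m + a_k \bar b_ℓ a_m + b_k \bar a_ℓ a_m) dτ`
`− Σ_{k−ℓ+m=j, k²−ℓ²+m²≠j²} (2/(j²−k²+ℓ²−m²)) [(a_k \bar a_ℓ a_m)(t) e^{i(j²−k²+ℓ²−m²)t/(2ε)} − α_k \bar α_ℓ α_m]`,
where `α = a(0)`. -/
def SolvesCorrector (T ε : ℝ) (a b : ℝ → lp (fun _ : ℤ => ℂ) 1) : Prop :=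
  ∀ (j : ℤ), ∀ t ∈ Set.Icc (0 : ℝ) T,
    Summable (fun p : res1 j =>
      ‖∫ τ in (0 : ℝ)..t,
          (a τ (↑p : ℤ × ℤ × ℤ).1 * (starRingEnd ℂ) (a τ (↑p : ℤ × ℤ × ℤ).2.1)
              * b τ (↑p : ℤ × ℤ × ℤ).2.2
            + a τ (↑p : ℤ × ℤ × ℤ).1 * (starRingEnd ℂ) (b τ (↑p : ℤ × ℤ × ℤ).2.1)
              * a τ (↑p : ℤ × ℤ × ℤ).2.2
            + b τ (↑p : ℤ × ℤ × ℤ).1 * (starRingEnd ℂ) (a τ (↑p : ℤ × ℤ × ℤ).2.1)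
              * a τ (↑p : ℤ × ℤ × ℤ).2.2)‖) ∧
    Summable (fun p : nonres1 j =>
      ‖(2 / ((j ^ 2 - (↑p : ℤ × ℤ × ℤ).1 ^ 2 + (↑p : ℤ × ℤ × ℤ).2.1 ^ 2
              - (↑p : ℤ × ℤ × ℤ).2.2 ^ 2 : ℤ) : ℂ))
          * ((a t (↑p : ℤ × ℤ × ℤ).1 * (starRingEnd ℂ) (a t (↑p : ℤ × ℤ × ℤ).2.1)
                * a t (↑p : ℤ × ℤ × ℤ).2.2)
              * Complex.exp (Complex.I * ((j ^ 2 - (↑p : ℤ × ℤ × ℤ).1 ^ 2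
                  + (↑p : ℤ × ℤ × ℤ).2.1 ^ 2 - (↑p : ℤ × ℤ × ℤ).2.2 ^ 2 : ℤ) : ℂ)
                  * t / (2 * ε))
            - a 0 (↑p : ℤ × ℤ × ℤ).1 * (starRingEnd ℂ) (a 0 (↑p : ℤ × ℤ × ℤ).2.1)
                * a 0 (↑p : ℤ × ℤ × ℤ).2.2)‖) ∧
    b t j
      = -Complex.I * ∑' p : res1 j,
          (∫ τ in (0 : ℝ)..t,
            (a τ (↑p : ℤ × ℤ × ℤ).1 * (starRingEnd ℂ) (a τ (↑p : ℤ × ℤ × ℤ).2.1)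
                * b τ (↑p : ℤ × ℤ × ℤ).2.2
              + a τ (↑p : ℤ × ℤ × ℤ).1 * (starRingEnd ℂ) (b τ (↑p : ℤ × ℤ × ℤ).2.1)
                * a τ (↑p : ℤ × ℤ × ℤ).2.2
              + b τ (↑p : ℤ × ℤ × ℤ).1 * (starRingEnd ℂ) (a τ (↑p : ℤ × ℤ × ℤ).2.1)
                * a τ (↑p : ℤ × ℤ × ℤ).2.2))
        - ∑' p : nonres1 j,
            (2 / ((j ^ 2 - (↑p : ℤ × ℤ × ℤ).1 ^ 2 + (↑p : ℤ × ℤ × ℤ).2.1 ^ 2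
                - (↑p : ℤ × ℤ × ℤ).2.2 ^ 2 : ℤ) : ℂ))
              * ((a t (↑p : ℤ × ℤ × ℤ).1 * (starRingEnd ℂ) (a t (↑p : ℤ × ℤ × ℤ).2.1)
                    * a t (↑p : ℤ × ℤ × ℤ).2.2)
                  * Complex.exp (Complex.I * ((j ^ 2 - (↑p : ℤ × ℤ × ℤ).1 ^ 2
                      + (↑p : ℤ × ℤ × ℤ).2.1 ^ 2 - (↑p : ℤ × ℤ × ℤ).2.2 ^ 2 : ℤ) : ℂ)
                      * t / (2 * ε))
                - a 0 (↑p : ℤ × ℤ × ℤ).1 * (starRingEnd ℂ) (a 0 (↑p : ℤ × ℤ × ℤ).2.1)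
                    * a 0 (↑p : ℤ × ℤ × ℤ).2.2)


noncomputable abbrev CX : Type := ↥(lp (fun _ : ℤ => ℂ) 1)

lemma cx_hasSum (x : CX) : HasSum (fun k => ‖x k‖) ‖x‖ := by
  have := lp.hasSum_norm (p := 1) (by simp) x
  simpa using this

lemma real_hasSum_mul {α β : Type*} {f : α → ℝ} {g : β → ℝ} {x y : ℝ} (hf : HasSum f x)
    (hg : HasSum g y) (hf0 : ∀ i, 0 ≤ f i) (hg0 : ∀ i, 0 ≤ g i) :
    HasSum (fun p : α × β => f p.1 * g p.2) (x * y) :=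
  hf.mul hg (hf.summable.mul_of_nonneg hg.summable hf0 hg0)

lemma cx_hasSum3 (x y z : CX) :
    HasSum (fun p : ℤ × ℤ × ℤ => ‖x p.1‖ * (‖y p.2.1‖ * ‖z p.2.2‖)) (‖x‖ * (‖y‖ * ‖z‖)) := by
  have h1 : HasSum (fun p : ℤ × ℤ => ‖y p.1‖ * ‖z p.2‖) (‖y‖ * ‖z‖) :=
    real_hasSum_mul (f := fun k => ‖y k‖) (g := fun k => ‖z k‖) (cx_hasSum y) (cx_hasSum z)
      (fun _ => norm_nonneg _) (fun _ => norm_nonneg _)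
  have h0 : ∀ p : ℤ × ℤ, 0 ≤ ‖y p.1‖ * ‖z p.2‖ :=
    fun p => mul_nonneg (norm_nonneg _) (norm_nonneg _)
  exact real_hasSum_mul (f := fun k => ‖x k‖) (g := fun p : ℤ × ℤ => ‖y p.1‖ * ‖z p.2‖)
    (cx_hasSum x) h1 (fun _ => norm_nonneg _) h0

/-- One term of the weighted trilinear sum. -/
noncomputable def ctm (w : ℤ × ℤ × ℤ → ℂ) (x y z : CX) (p : ℤ × ℤ × ℤ) : CX :=
  lp.single 1 (p.1 - p.2.1 + p.2.2) (w p * (x p.1 * (starRingEnd ℂ) (y p.2.1) * z p.2.2))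

/-- The weighted trilinear form. -/
noncomputable def ctri (w : ℤ × ℤ × ℤ → ℂ) (x y z : CX) : CX := ∑' p, ctm w x y z p

section tri
variable {w : ℤ × ℤ × ℤ → ℂ} {C : ℝ}

lemma ctm_norm (hw : ∀ p, ‖w p‖ ≤ C) (x y z : CX) (p : ℤ × ℤ × ℤ) :
    ‖ctm w x y z p‖ ≤ C * (‖x p.1‖ * (‖y p.2.1‖ * ‖z p.2.2‖)) := by
  unfold ctm
  rw [lp.norm_single (by simp), norm_mul, norm_mul, norm_mul, RCLike.norm_conj, mul_assoc]
  gcongr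
  exact hw p

lemma ctm_summable (hw : ∀ p, ‖w p‖ ≤ C) (x y z : CX) : Summable (ctm w x y z) :=
  Summable.of_norm_bounded ((cx_hasSum3 x y z).summable.mul_left C) (ctm_norm hw x y z)

lemma ctri_norm (hw : ∀ p, ‖w p‖ ≤ C) (x y z : CX) :
    ‖ctri w x y z‖ ≤ C * (‖x‖ * (‖y‖ * ‖z‖)) :=
  tsum_of_norm_bounded ((cx_hasSum3 x y z).mul_left C) (ctm_norm hw x y z)

lemma ctri_add1 (hw : ∀ p, ‖w p‖ ≤ C) (x x' y z : CX) :
    ctri w (x + x') y z = ctri w x y z + ctri w x' y z := by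
  unfold ctri
  rw [← (ctm_summable hw x y z).tsum_add (ctm_summable hw x' y z)]
  congr 1; ext1 p
  simp only [ctm, ← lp.single_add, lp.coeFn_add, Pi.add_apply]
  congr 1; ring

lemma ctri_add2 (hw : ∀ p, ‖w p‖ ≤ C) (x y y' z : CX) :
    ctri w x (y + y') z = ctri w x y z + ctri w x y' z := by
  unfold ctri
  rw [← (ctm_summable hw x y z).tsum_add (ctm_summable hw x y' z)]
  congr 1; ext1 p
  simp only [ctm, ← lp.single_add, lp.coeFn_add, Pi.add_apply, map_add]
  congr 1; ring

lemma ctri_add3 (hw : ∀ p, ‖w p‖ ≤ C) (x y z z' : CX) :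
    ctri w x y (z + z') = ctri w x y z + ctri w x y z' := by
  unfold ctri
  rw [← (ctm_summable hw x y z).tsum_add (ctm_summable hw x y z')]
  congr 1; ext1 p
  simp only [ctm, ← lp.single_add, lp.coeFn_add, Pi.add_apply]
  congr 1; ring

lemma ctri_apply (hw : ∀ p, ‖w p‖ ≤ C) (x y z : CX) (j : ℤ) :
    HasSum ({p : ℤ × ℤ × ℤ | p.1 - p.2.1 + p.2.2 = j}.indicator
      (fun p => w p * (x p.1 * (starRingEnd ℂ) (y p.2.1) * z p.2.2))) (ctri w x y z j) := by
  have h := ((ctm_summable hw x y z).hasSum).mapL (lp.evalCLM ℂ (fun _ : ℤ => ℂ) 1 j)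
  refine HasSum.congr_fun h ?_
  intro p
  change _ = ctm w x y z p j
  unfold ctm
  rw [lp.single_apply]
  by_cases hp : p.1 - p.2.1 + p.2.2 = j
  · subst hp
    simp
  · rw [Set.indicator_of_notMem (by simpa using hp), Pi.single_eq_of_ne (Ne.symm hp)]

lemma ctri_continuous {w : ℝ → ℤ × ℤ × ℤ → ℂ} (hw : ∀ t p, ‖w t p‖ ≤ C)
    (hwc : ∀ p, Continuous (fun t => w t p)) {a b c : ℝ → CX} (ha : Continuous a)
    (hb : Continuous b) (hc : Continuous c) :
    Continuous (fun t => ctri (w t) (a t) (b t) (c t)) := by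
  rw [continuous_iff_continuousAt]
  intro s
  have h0 : Tendsto (fun t => ctri (w t) (a s) (b s) (c s)) (nhds s)
      (nhds (ctri (w s) (a s) (b s) (c s))) := by
    refine tendsto_tsum_of_dominated_convergence ((cx_hasSum3 (a s) (b s) (c s)).summable.mul_left C)
      ?_ (Eventually.of_forall fun t p => ctm_norm (hw t) _ _ _ _)
    intro p
    have : Continuous (fun t => ctm (w t) (a s) (b s) (c s) p) :=
      (lp.isometry_single (p := 1) (E := fun _ : ℤ => ℂ) (p.1 - p.2.1 + p.2.2)).continuous.comp
        ((hwc p).mul continuous_const)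
    exact this.tendsto s
  have h1 : Tendsto (fun t => ctri (w t) (a t - a s) (b t) (c t)) (nhds s) (nhds 0) := by
    refine squeeze_zero_norm (fun t => ctri_norm (hw t) _ _ _) ?_
    have : Continuous (fun t => C * (‖a t - a s‖ * (‖b t‖ * ‖c t‖))) := by fun_prop
    simpa using this.tendsto s
  have h2 : Tendsto (fun t => ctri (w t) (a s) (b t - b s) (c t)) (nhds s) (nhds 0) := by
    refine squeeze_zero_norm (fun t => ctri_norm (hw t) _ _ _) ?_
    have : Continuous (fun t => C * (‖a s‖ * (‖b t - b s‖ * ‖c t‖))) := by fun_prop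
    simpa using this.tendsto s
  have h3 : Tendsto (fun t => ctri (w t) (a s) (b s) (c t - c s)) (nhds s) (nhds 0) := by
    refine squeeze_zero_norm (fun t => ctri_norm (hw t) _ _ _) ?_
    have : Continuous (fun t => C * (‖a s‖ * (‖b s‖ * ‖c t - c s‖))) := by fun_prop
    simpa using this.tendsto s
  have h4 := ((h1.add h2).add h3).add h0
  simp only [zero_add] at h4
  refine h4.congr fun t => ?_
  rw [add_assoc, ← ctri_add3 (hw t), sub_add_cancel, add_assoc, ← ctri_add2 (hw t), sub_add_cancel,
    ← ctri_add1 (hw t), sub_add_cancel]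

end tri

section volterra
variable {E : Type*} [NormedAddCommGroup E] [NormedSpace ℝ E]

lemma sum_int_interchange {ι : Type*} [Countable ι] {f : ι → ℝ → E} {t K : ℝ}
    (ht : 0 ≤ t) (hf : ∀ i, ContinuousOn (f i) (Icc 0 t))
    (hK : ∀ τ ∈ Icc 0 t, ∀ s : Finset ι, ∑ i ∈ s, ‖f i τ‖ ≤ K) :
    Summable (fun i => ‖∫ τ in (0 : ℝ)..t, f i τ‖) ∧
    HasSum (fun i => ∫ τ in (0 : ℝ)..t, f i τ) (∫ τ in (0 : ℝ)..t, ∑' i, f i τ) := by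
  have hi : ∀ i, IntegrableOn (f i) (Ioc 0 t) := fun i =>
    ((hf i).integrableOn_Icc).mono_set Ioc_subset_Icc_self
  have hs : Summable (fun i => ∫ τ in Ioc 0 t, ‖f i τ‖) := by
    refine summable_of_sum_le (c := ∫ τ in Ioc 0 t, K)
      (fun i => integral_nonneg fun _ => norm_nonneg _) ?_
    intro s
    rw [← integral_finsetSum s (fun i _ => (hi i).norm)]
    refine setIntegral_mono_on (integrable_finsetSum s (fun i _ => (hi i).norm)) (by simp)
      measurableSet_Ioc ?_
    intro τ hτ
    exact hK τ (Ioc_subset_Icc_self hτ) s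
  simp only [intervalIntegral.integral_of_le ht]
  exact ⟨Summable.of_nonneg_of_le (fun _ => norm_nonneg _)
    (fun i => norm_integral_le_integral_norm _) hs, hasSum_integral_of_summable_integral_norm hi hs⟩

/-- Majorant of the iterates. -/
noncomputable def vmaj (K M : ℝ) (n : ℕ) (t : ℝ) : ℝ := K * ((M * t) ^ n / n.factorial)

lemma vmaj_summable (K M t : ℝ) : Summable (fun n => vmaj K M n t) :=
  (Real.summable_pow_div_factorial (M * t)).mul_left K

lemma vmaj_nonneg {K M t : ℝ} (hK : 0 ≤ K) (hM : 0 ≤ M) (ht : 0 ≤ t) (n : ℕ) :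
    0 ≤ vmaj K M n t := by unfold vmaj; positivity

lemma vmaj_mono {K M t s : ℝ} (hK : 0 ≤ K) (hM : 0 ≤ M) (ht : 0 ≤ t) (hts : t ≤ s) (n : ℕ) :
    vmaj K M n t ≤ vmaj K M n s := by unfold vmaj; gcongr

lemma vmaj_integral (K M : ℝ) (n : ℕ) (t : ℝ) :
    ∫ τ in (0 : ℝ)..t, M * vmaj K M n τ = vmaj K M (n + 1) t := by
  unfold vmaj
  have : ∀ τ : ℝ, M * (K * ((M * τ) ^ n / n.factorial))
      = (M ^ (n + 1) * K / n.factorial) * τ ^ n := by intro τ; rw [mul_pow]; ring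
  simp only [this, intervalIntegral.integral_const_mul, integral_pow]
  have h1 : ((n.factorial : ℕ) : ℝ) ≠ 0 := by positivity
  have h2 : (n : ℝ) + 1 ≠ 0 := by positivity
  rw [Nat.factorial_succ]
  push_cast
  field_simp
  simp only [ne_eq, Nat.add_eq_zero_iff, one_ne_zero, and_false, not_false_eq_true, zero_pow,
    sub_zero, mul_pow]
  ring

variable {G : ℝ → E →+ E} {M T : ℝ}

lemma volt_step (hb : ∀ τ ∈ Icc 0 T, ∀ x, ‖G τ x‖ ≤ M * ‖x‖) (hM : 0 ≤ M)
    {K : ℝ} {n : ℕ} {v : ℝ → E} (hv : ∀ t ∈ Icc 0 T, ‖v t‖ ≤ vmaj K M n t) :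
    ∀ t ∈ Icc 0 T, ‖∫ τ in (0 : ℝ)..t, G τ (v τ)‖ ≤ vmaj K M (n + 1) t := by
  intro t ht
  rw [← vmaj_integral]
  refine intervalIntegral.norm_integral_le_of_norm_le ht.1 (ae_of_all _ ?_) ?_
  · intro τ hτ
    have hτ' : τ ∈ Icc 0 T := ⟨hτ.1.le, hτ.2.trans ht.2⟩
    exact (hb τ hτ' _).trans (mul_le_mul_of_nonneg_left (hv τ hτ') hM)
  · apply Continuous.intervalIntegrable
    unfold vmaj
    fun_prop

lemma volt_unique (hb : ∀ τ ∈ Icc 0 T, ∀ x, ‖G τ x‖ ≤ M * ‖x‖) (hM : 0 ≤ M)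
    (hc : ∀ b : ℝ → E, ContinuousOn b (Icc 0 T) → ContinuousOn (fun τ => G τ (b τ)) (Icc 0 T))
    {F b c : ℝ → E} (hbc : ContinuousOn b (Icc 0 T)) (hcc : ContinuousOn c (Icc 0 T))
    (hbe : ∀ t ∈ Icc 0 T, b t = (∫ τ in (0 : ℝ)..t, G τ (b τ)) + F t)
    (hce : ∀ t ∈ Icc 0 T, c t = (∫ τ in (0 : ℝ)..t, G τ (c τ)) + F t) :
    ∀ t ∈ Icc 0 T, b t = c t := by
  obtain ⟨K, hK⟩ := isCompact_Icc.exists_bound_of_continuousOn (hbc.sub hcc)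
  have hint : ∀ f : ℝ → E, ContinuousOn f (Icc 0 T) → ∀ t ∈ Icc 0 T,
      IntervalIntegrable (fun τ => G τ (f τ)) volume 0 t := by
    intro f hf t ht
    refine ContinuousOn.intervalIntegrable ?_
    rw [uIcc_of_le ht.1]
    exact (hc f hf).mono (Icc_subset_Icc_right ht.2)
  have key : ∀ n : ℕ, ∀ t ∈ Icc 0 T, ‖b t - c t‖ ≤ vmaj K M n t := by
    intro n
    induction n with
    | zero => intro t ht; simpa [vmaj] using hK t ht
    | succ n ih =>
      intro t ht
      have := volt_step hb hM ih t ht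
      rw [hbe t ht, hce t ht, add_sub_add_right_eq_sub,
        ← intervalIntegral.integral_sub (hint b hbc t ht) (hint c hcc t ht)]
      simpa only [map_sub] using this
  intro t ht
  have h0 := (vmaj_summable K M t).tendsto_atTop_zero
  have := ge_of_tendsto' h0 (fun n => key n t ht)
  exact sub_eq_zero.mp (norm_le_zero_iff.mp this)

/-- Picard iterates. -/
noncomputable def vit (G : ℝ → E →+ E) (F : ℝ → E) : ℕ → ℝ → E
  | 0 => F
  | n + 1 => fun t => ∫ τ in (0 : ℝ)..t, G τ (vit G F n τ)

lemma volt_exists [CompleteSpace E] (hT : 0 ≤ T) (hb : ∀ τ ∈ Icc 0 T, ∀ x, ‖G τ x‖ ≤ M * ‖x‖)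
    (hM : 0 ≤ M)
    (hc : ∀ b : ℝ → E, ContinuousOn b (Icc 0 T) → ContinuousOn (fun τ => G τ (b τ)) (Icc 0 T))
    {F : ℝ → E} (hF : ContinuousOn F (Icc 0 T)) {K : ℝ} (hK : ∀ t ∈ Icc 0 T, ‖F t‖ ≤ K) :
    ∃ b : ℝ → E, ContinuousOn b (Icc 0 T) ∧
      (∀ t ∈ Icc 0 T, b t = (∫ τ in (0 : ℝ)..t, G τ (b τ)) + F t) ∧
      ∀ t ∈ Icc 0 T, ‖b t‖ ≤ ∑' n, vmaj K M n T := by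
  have hK0 : 0 ≤ K := (norm_nonneg _).trans (hK 0 ⟨le_rfl, hT⟩)
  have hbd : ∀ n, ∀ t ∈ Icc 0 T, ‖vit G F n t‖ ≤ vmaj K M n t := by
    intro n
    induction n with
    | zero => intro t ht; simpa [vmaj, vit] using hK t ht
    | succ n ih => exact volt_step hb hM ih
  have hbd' : ∀ n, ∀ t ∈ Icc 0 T, ‖vit G F n t‖ ≤ vmaj K M n T := fun n t ht =>
    (hbd n t ht).trans (vmaj_mono hK0 hM ht.1 ht.2 n)
  have hcont : ∀ n, ContinuousOn (vit G F n) (Icc 0 T) := by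
    intro n
    induction n with
    | zero => exact hF
    | succ n ih =>
      have := intervalIntegral.continuousOn_primitive_interval (a := 0) (b := T) (μ := volume)
        (f := fun τ => G τ (vit G F n τ)) (by
          rw [uIcc_of_le hT]; exact (hc _ ih).integrableOn_Icc)
      rwa [uIcc_of_le hT] at this
  have hsum := vmaj_summable K M T
  have hsumm : ∀ t ∈ Icc 0 T, Summable (fun n => vit G F n t) := fun t ht =>
    Summable.of_norm_bounded hsum (fun n => hbd' n t ht)
  refine ⟨fun t => ∑' n, vit G F n t, continuousOn_tsum hcont hsum hbd', ?_, ?_⟩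
  · intro t ht
    have hsub : Icc 0 t ⊆ Icc 0 T := Icc_subset_Icc_right ht.2
    have h1 := (sum_int_interchange (f := fun n τ => G τ (vit G F n τ)) (t := t)
      (K := ∑' n, M * vmaj K M n T) ht.1 (fun n => (hc _ (hcont n)).mono hsub) (by
        intro τ hτ s
        refine (Finset.sum_le_sum fun n _ => (hb τ (hsub hτ) _).trans
          (mul_le_mul_of_nonneg_left (hbd' n τ (hsub hτ)) hM)).trans ?_
        exact (hsum.mul_left M).sum_le_tsum s
          (fun n _ => mul_nonneg hM (vmaj_nonneg hK0 hM hT n)))).2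
    have h2 : ∫ τ in (0 : ℝ)..t, ∑' n, G τ (vit G F n τ)
        = ∫ τ in (0 : ℝ)..t, G τ (∑' n, vit G F n τ) := by
      refine intervalIntegral.integral_congr ?_
      intro τ hτ
      rw [uIcc_of_le ht.1] at hτ
      have hcg : Continuous (G τ) :=
        AddMonoidHomClass.continuous_of_bound (G τ) M (hb τ (hsub hτ))
      exact ((hsumm τ (hsub hτ)).hasSum.map (G τ) hcg).tsum_eq
    rw [h2] at h1
    change ∑' n, vit G F n t = _
    rw [(hsumm t ht).tsum_eq_zero_add, add_comm, ← h1.tsum_eq]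
    rfl
  · intro t ht
    exact tsum_of_norm_bounded hsum.hasSum (fun n => hbd' n t ht)

end volterra

section connect

lemma ctri_continuousOn {C T : ℝ} (hT : 0 ≤ T) {w : ℝ → ℤ × ℤ × ℤ → ℂ}
    (hw : ∀ t p, ‖w t p‖ ≤ C)
    (hwc : ∀ p, Continuous (fun t => w t p)) {a b c : ℝ → CX} (ha : ContinuousOn a (Icc 0 T))
    (hb : ContinuousOn b (Icc 0 T)) (hc : ContinuousOn c (Icc 0 T)) :
    ContinuousOn (fun t => ctri (w t) (a t) (b t) (c t)) (Icc 0 T) := by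
  have h := ctri_continuous hw hwc (ha.domRestrict.Icc_extend' (h := hT))
    (hb.domRestrict.Icc_extend' (h := hT)) (hc.domRestrict.Icc_extend' (h := hT))
  refine h.continuousOn.congr ?_
  intro t ht
  simp only [IccExtend_of_mem hT _ ht, domRestrict_apply]

/-- Resonant weight. -/
def wres (p : ℤ × ℤ × ℤ) : ℂ :=
  if p.1 ^ 2 - p.2.1 ^ 2 + p.2.2 ^ 2 = (p.1 - p.2.1 + p.2.2) ^ 2 then 1 else 0

/-- The phase. -/
def phs (p : ℤ × ℤ × ℤ) : ℤ :=
  (p.1 - p.2.1 + p.2.2) ^ 2 - p.1 ^ 2 + p.2.1 ^ 2 - p.2.2 ^ 2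

/-- Non-resonant weight. -/
noncomputable def wnon (ε t : ℝ) (p : ℤ × ℤ × ℤ) : ℂ :=
  if phs p = 0 then 0 else
    (2 / ((phs p : ℤ) : ℂ)) * Complex.exp (Complex.I * ((phs p : ℤ) : ℂ) * t / (2 * ε))

lemma wres_norm (p : ℤ × ℤ × ℤ) : ‖wres p‖ ≤ 1 := by
  unfold wres; split_ifs <;> simp

lemma wnon_norm (ε t : ℝ) (p : ℤ × ℤ × ℤ) : ‖wnon ε t p‖ ≤ 2 := by
  unfold wnon
  split_ifs with h
  · simp
  · have h1 : Complex.I * ((phs p : ℤ) : ℂ) * t / (2 * ε)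
        = (((phs p : ℤ) * t / (2 * ε) : ℝ) : ℂ) * Complex.I := by
      push_cast; ring
    rw [norm_mul, h1, Complex.norm_exp_ofReal_mul_I, mul_one, norm_div, Complex.norm_intCast]
    have h2 : (1 : ℝ) ≤ |((phs p : ℤ) : ℝ)| := by exact_mod_cast Int.one_le_abs h
    rw [div_le_iff₀ (by linarith)]
    simp only [RCLike.norm_ofNat]
    linarith

lemma wnon_cont (ε : ℝ) (p : ℤ × ℤ × ℤ) : Continuous (fun t => wnon ε t p) := by
  unfold wnon
  split_ifs
  · exact continuous_const
  · fun_prop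

lemma hasSum_res (x y z : CX) (j : ℤ) :
    HasSum (fun p : res1 j => x (p : ℤ × ℤ × ℤ).1 * (starRingEnd ℂ) (y (p : ℤ × ℤ × ℤ).2.1)
      * z (p : ℤ × ℤ × ℤ).2.2) (ctri wres x y z j) := by
  have h := ctri_apply wres_norm x y z j
  refine (hasSum_subtype_iff_indicator (s := res1 j)
    (f := fun p : ℤ × ℤ × ℤ => x p.1 * (starRingEnd ℂ) (y p.2.1) * z p.2.2)).mpr ?_
  refine HasSum.congr_fun h ?_
  intro p
  by_cases hp : p.1 - p.2.1 + p.2.2 = j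
  · rw [Set.indicator_of_mem (show p ∈ {p : ℤ × ℤ × ℤ | p.1 - p.2.1 + p.2.2 = j} from hp)]
    by_cases hq : p.1 ^ 2 - p.2.1 ^ 2 + p.2.2 ^ 2 = j ^ 2
    · rw [Set.indicator_of_mem (show p ∈ res1 j from ⟨hp, hq⟩), wres, if_pos (by rw [hp, hq]),
        one_mul]
    · rw [Set.indicator_of_notMem (fun h : p ∈ res1 j => hq h.2), wres, if_neg (by rwa [hp]),
        zero_mul]
  · rw [Set.indicator_of_notMem (fun h : p ∈ res1 j => hp h.1), Set.indicator_of_notMem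
      (show p ∉ {p : ℤ × ℤ × ℤ | p.1 - p.2.1 + p.2.2 = j} from hp)]

lemma hasSum_non (ε t : ℝ) (x y z : CX) (j : ℤ) :
    HasSum (fun p : nonres1 j => (2 / ((j ^ 2 - (↑p : ℤ × ℤ × ℤ).1 ^ 2 + (↑p : ℤ × ℤ × ℤ).2.1 ^ 2
              - (↑p : ℤ × ℤ × ℤ).2.2 ^ 2 : ℤ) : ℂ)) *
        (x (p : ℤ × ℤ × ℤ).1 * (starRingEnd ℂ) (y (p : ℤ × ℤ × ℤ).2.1)
          * z (p : ℤ × ℤ × ℤ).2.2 * Complex.exp (Complex.I * ((j ^ 2 - (↑p : ℤ × ℤ × ℤ).1 ^ 2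
                  + (↑p : ℤ × ℤ × ℤ).2.1 ^ 2 - (↑p : ℤ × ℤ × ℤ).2.2 ^ 2 : ℤ) : ℂ)
                  * t / (2 * ε)))) (ctri (wnon ε t) x y z j) := by
  have h := ctri_apply (wnon_norm ε t) x y z j
  refine (hasSum_subtype_iff_indicator (s := nonres1 j)
    (f := fun p : ℤ × ℤ × ℤ => (2 / ((j ^ 2 - p.1 ^ 2 + p.2.1 ^ 2 - p.2.2 ^ 2 : ℤ) : ℂ)) *
        (x p.1 * (starRingEnd ℂ) (y p.2.1)
          * z p.2.2 * Complex.exp (Complex.I * ((j ^ 2 - p.1 ^ 2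
                  + p.2.1 ^ 2 - p.2.2 ^ 2 : ℤ) : ℂ) * t / (2 * ε))))).mpr ?_
  refine HasSum.congr_fun h ?_
  intro p
  by_cases hp : p.1 - p.2.1 + p.2.2 = j
  · rw [Set.indicator_of_mem (show p ∈ {p : ℤ × ℤ × ℤ | p.1 - p.2.1 + p.2.2 = j} from hp)]
    by_cases hq : p.1 ^ 2 - p.2.1 ^ 2 + p.2.2 ^ 2 = j ^ 2
    · rw [Set.indicator_of_notMem (fun h : p ∈ nonres1 j => h.2 hq), wnon, if_pos, zero_mul]
      rw [phs, hp]; linarith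
    · have h0 : phs p ≠ 0 := by
        intro h0
        rw [phs, hp] at h0
        exact hq (by linarith)
      rw [Set.indicator_of_mem (show p ∈ nonres1 j from ⟨hp, hq⟩), wnon, if_neg h0]
      simp only [phs, hp]
      ring
  · rw [Set.indicator_of_notMem (fun h : p ∈ nonres1 j => hp h.1), Set.indicator_of_notMem
      (show p ∉ {p : ℤ × ℤ × ℤ | p.1 - p.2.1 + p.2.2 = j} from hp)]

/-- The linear operator. -/
noncomputable def cG (x : CX) : CX →+ CX := AddMonoidHom.mk'
  (fun b => -Complex.I • (ctri wres x x b + ctri wres x b x + ctri wres b x x)) (by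
    intro b c
    simp only [ctri_add1 wres_norm, ctri_add2 wres_norm, ctri_add3 wres_norm, smul_add]
    abel)

lemma cG_apply (x b : CX) :
    cG x b = -Complex.I • (ctri wres x x b + ctri wres x b x + ctri wres b x x) := rfl

lemma cG_norm (x b : CX) : ‖cG x b‖ ≤ 3 * ‖x‖ ^ 2 * ‖b‖ := by
  rw [cG_apply, norm_smul, norm_neg, Complex.norm_I, one_mul]
  refine (norm_add₃_le).trans ?_
  have h1 := ctri_norm wres_norm x x b
  have h2 := ctri_norm wres_norm x b x
  have h3 := ctri_norm wres_norm b x x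
  nlinarith

/-- The forcing. -/
noncomputable def cF (ε : ℝ) (a : ℝ → CX) (t : ℝ) : CX :=
  -(ctri (wnon ε t) (a t) (a t) (a t) - ctri (wnon ε 0) (a 0) (a 0) (a 0))

lemma finsum_le3 (x y z : CX) (s : Set (ℤ × ℤ × ℤ)) (u : Finset s) :
    ∑ p ∈ u, ‖x (p : ℤ × ℤ × ℤ).1 * (starRingEnd ℂ) (y (p : ℤ × ℤ × ℤ).2.1)
      * z (p : ℤ × ℤ × ℤ).2.2‖ ≤ ‖x‖ * (‖y‖ * ‖z‖) := by
  have h := cx_hasSum3 x y z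
  have h2 := sum_le_hasSum (u.map (Function.Embedding.subtype _))
    (fun p _ => mul_nonneg (norm_nonneg (x p.1))
      (mul_nonneg (norm_nonneg (y p.2.1)) (norm_nonneg (z p.2.2)))) h
  rw [Finset.sum_map] at h2
  refine le_trans (le_of_eq ?_) h2
  refine Finset.sum_congr rfl fun p _ => ?_
  rw [norm_mul, norm_mul, RCLike.norm_conj, mul_assoc]
  rfl

lemma cG_cont {T : ℝ} (hT : 0 ≤ T) {a : ℝ → CX} (ha : ContinuousOn a (Icc 0 T)) (b : ℝ → CX)
    (hb : ContinuousOn b (Icc 0 T)) : ContinuousOn (fun τ => cG (a τ) (b τ)) (Icc 0 T) := by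
  have hw : ∀ (t : ℝ) p, ‖(fun _ : ℝ => wres) t p‖ ≤ 1 := fun _ p => wres_norm p
  have hwc : ∀ p, Continuous (fun t : ℝ => (fun _ : ℝ => wres) t p) := fun _ => continuous_const
  exact (((ctri_continuousOn hT hw hwc ha ha hb).add (ctri_continuousOn hT hw hwc ha hb ha)).add
    (ctri_continuousOn hT hw hwc hb ha ha)).const_smul (-Complex.I)

lemma cx_coord {T : ℝ} {a : ℝ → CX} (ha : ContinuousOn a (Icc 0 T)) (j : ℤ) :
    ContinuousOn (fun t => a t j) (Icc 0 T) :=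
  (lp.evalCLM ℂ (fun _ : ℤ => ℂ) 1 j).continuous.comp_continuousOn ha

lemma connect_res {T : ℝ} {a b : ℝ → CX} (ha : ContinuousOn a (Icc 0 T))
    (hb : ContinuousOn b (Icc 0 T)) (j : ℤ) (t : ℝ) (ht : t ∈ Icc 0 T) :
    Summable (fun p : res1 j =>
      ‖∫ τ in (0 : ℝ)..t,
          (a τ (↑p : ℤ × ℤ × ℤ).1 * (starRingEnd ℂ) (a τ (↑p : ℤ × ℤ × ℤ).2.1)
              * b τ (↑p : ℤ × ℤ × ℤ).2.2
            + a τ (↑p : ℤ × ℤ × ℤ).1 * (starRingEnd ℂ) (b τ (↑p : ℤ × ℤ × ℤ).2.1)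
              * a τ (↑p : ℤ × ℤ × ℤ).2.2
            + b τ (↑p : ℤ × ℤ × ℤ).1 * (starRingEnd ℂ) (a τ (↑p : ℤ × ℤ × ℤ).2.1)
              * a τ (↑p : ℤ × ℤ × ℤ).2.2)‖) ∧
    (∫ τ in (0 : ℝ)..t, cG (a τ) (b τ)) j = -Complex.I * ∑' p : res1 j,
          (∫ τ in (0 : ℝ)..t,
            (a τ (↑p : ℤ × ℤ × ℤ).1 * (starRingEnd ℂ) (a τ (↑p : ℤ × ℤ × ℤ).2.1)
                * b τ (↑p : ℤ × ℤ × ℤ).2.2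
              + a τ (↑p : ℤ × ℤ × ℤ).1 * (starRingEnd ℂ) (b τ (↑p : ℤ × ℤ × ℤ).2.1)
                * a τ (↑p : ℤ × ℤ × ℤ).2.2
              + b τ (↑p : ℤ × ℤ × ℤ).1 * (starRingEnd ℂ) (a τ (↑p : ℤ × ℤ × ℤ).2.1)
                * a τ (↑p : ℤ × ℤ × ℤ).2.2)) := by
  have hT : 0 ≤ T := ht.1.trans ht.2
  have hsub : Icc 0 t ⊆ Icc 0 T := Icc_subset_Icc_right ht.2
  obtain ⟨A, hA⟩ := isCompact_Icc.exists_bound_of_continuousOn ha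
  obtain ⟨D, hD⟩ := isCompact_Icc.exists_bound_of_continuousOn hb
  have hA0 : 0 ≤ A := (norm_nonneg _).trans (hA t ht)
  have hD0 : 0 ≤ D := (norm_nonneg _).trans (hD t ht)
  have hstar : ∀ (c : ℝ → CX), ContinuousOn c (Icc 0 T) → ∀ k : ℤ,
      ContinuousOn (fun τ => (starRingEnd ℂ) (c τ k)) (Icc 0 T) := fun c hc k =>
    Complex.continuous_conj.comp_continuousOn (cx_coord hc k)
  have hI := sum_int_interchange (t := t) (K := A * (A * D) + A * (D * A) + D * (A * A))
    (f := fun (p : res1 j) τ =>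
          (a τ (↑p : ℤ × ℤ × ℤ).1 * (starRingEnd ℂ) (a τ (↑p : ℤ × ℤ × ℤ).2.1)
              * b τ (↑p : ℤ × ℤ × ℤ).2.2
            + a τ (↑p : ℤ × ℤ × ℤ).1 * (starRingEnd ℂ) (b τ (↑p : ℤ × ℤ × ℤ).2.1)
              * a τ (↑p : ℤ × ℤ × ℤ).2.2
            + b τ (↑p : ℤ × ℤ × ℤ).1 * (starRingEnd ℂ) (a τ (↑p : ℤ × ℤ × ℤ).2.1)
              * a τ (↑p : ℤ × ℤ × ℤ).2.2)) ht.1 (by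
      intro p
      exact (((((cx_coord ha _).mul (hstar a ha _)).mul (cx_coord hb _)).add
        (((cx_coord ha _).mul (hstar b hb _)).mul (cx_coord ha _))).add
        (((cx_coord hb _).mul (hstar a ha _)).mul (cx_coord ha _))).mono hsub) (by
      intro τ hτ s
      refine (Finset.sum_le_sum fun p _ => norm_add₃_le).trans ?_
      rw [Finset.sum_add_distrib, Finset.sum_add_distrib]
      have h1 := hA τ (hsub hτ)
      have h2 := hD τ (hsub hτ)
      refine add_le_add (add_le_add ?_ ?_) ?_
      · refine (finsum_le3 _ _ _ _ s).trans ?_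
        gcongr
      · refine (finsum_le3 _ _ _ _ s).trans ?_
        gcongr
      · refine (finsum_le3 _ _ _ _ s).trans ?_
        gcongr)
  refine ⟨hI.1, ?_⟩
  rw [hI.2.tsum_eq, ← intervalIntegral.integral_const_mul]
  have hint : IntervalIntegrable (fun τ => cG (a τ) (b τ)) volume 0 t := by
    refine ContinuousOn.intervalIntegrable ?_
    rw [uIcc_of_le ht.1]
    exact (cG_cont hT ha b hb).mono hsub
  have h3 := (lp.evalCLM ℂ (fun _ : ℤ => ℂ) 1 j).intervalIntegral_comp_comm hint
  refine Eq.trans h3.symm ?_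
  refine intervalIntegral.integral_congr ?_
  intro τ _
  change (cG (a τ) (b τ)) j = _
  dsimp only
  rw [cG_apply, (((hasSum_res (a τ) (a τ) (b τ) j).add (hasSum_res (a τ) (b τ) (a τ) j)).add
    (hasSum_res (b τ) (a τ) (a τ) j)).tsum_eq]
  rfl

lemma connect_non (ε t : ℝ) (a : ℝ → CX) (j : ℤ) :
    HasSum (fun p : nonres1 j =>
      (2 / ((j ^ 2 - (↑p : ℤ × ℤ × ℤ).1 ^ 2 + (↑p : ℤ × ℤ × ℤ).2.1 ^ 2
              - (↑p : ℤ × ℤ × ℤ).2.2 ^ 2 : ℤ) : ℂ))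
          * ((a t (↑p : ℤ × ℤ × ℤ).1 * (starRingEnd ℂ) (a t (↑p : ℤ × ℤ × ℤ).2.1)
                * a t (↑p : ℤ × ℤ × ℤ).2.2)
              * Complex.exp (Complex.I * ((j ^ 2 - (↑p : ℤ × ℤ × ℤ).1 ^ 2
                  + (↑p : ℤ × ℤ × ℤ).2.1 ^ 2 - (↑p : ℤ × ℤ × ℤ).2.2 ^ 2 : ℤ) : ℂ)
                  * t / (2 * ε))
            - a 0 (↑p : ℤ × ℤ × ℤ).1 * (starRingEnd ℂ) (a 0 (↑p : ℤ × ℤ × ℤ).2.1)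
                * a 0 (↑p : ℤ × ℤ × ℤ).2.2)) (-(cF ε a t j)) := by
  have h := (hasSum_non ε t (a t) (a t) (a t) j).sub (hasSum_non ε 0 (a 0) (a 0) (a 0) j)
  have e : -(cF ε a t j) = ctri (wnon ε t) (a t) (a t) (a t) j
      - ctri (wnon ε 0) (a 0) (a 0) (a 0) j := by
    simp only [cF, lp.coeFn_neg, lp.coeFn_sub, Pi.neg_apply, Pi.sub_apply, neg_neg]
  rw [e]
  refine HasSum.congr_fun h ?_
  intro p
  simp only [Complex.ofReal_zero, mul_zero, zero_div, Complex.exp_zero, mul_one, mul_sub]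

lemma solves_iff {T ε : ℝ} {a b : ℝ → CX} (ha : ContinuousOn a (Icc 0 T))
    (hb : ContinuousOn b (Icc 0 T)) :
    SolvesCorrector T ε a b ↔
      ∀ t ∈ Icc 0 T, b t = (∫ τ in (0 : ℝ)..t, cG (a τ) (b τ)) + cF ε a t := by
  constructor
  · intro h t ht
    refine lp.ext (funext fun j => ?_)
    rw [(h j t ht).2.2, (connect_non ε t a j).tsum_eq, ← (connect_res ha hb j t ht).2,
      sub_neg_eq_add]
    rfl
  · intro h j t ht
    refine ⟨(connect_res ha hb j t ht).1, (connect_non ε t a j).summable.norm, ?_⟩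
    rw [(connect_non ε t a j).tsum_eq, ← (connect_res ha hb j t ht).2, sub_neg_eq_add]
    have := congrArg (fun x : CX => x j) (h t ht)
    exact this

lemma cF_cont {T : ℝ} (ε : ℝ) (hT : 0 ≤ T) {a : ℝ → CX} (ha : ContinuousOn a (Icc 0 T)) :
    ContinuousOn (cF ε a) (Icc 0 T) :=
  ((ctri_continuousOn hT (wnon_norm ε) (wnon_cont ε) ha ha ha).sub continuousOn_const).neg

lemma cF_norm {T A : ℝ} (ε : ℝ) (hT : 0 ≤ T) {a : ℝ → CX} (hA : ∀ t ∈ Icc 0 T, ‖a t‖ ≤ A)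
    (t : ℝ) (ht : t ∈ Icc 0 T) :
    ‖cF ε a t‖ ≤ 2 * (A * (A * A)) + 2 * (A * (A * A)) := by
  have hA0 : 0 ≤ A := (norm_nonneg _).trans (hA t ht)
  have h1 := hA t ht
  have h0 := hA 0 ⟨le_rfl, hT⟩
  rw [cF, norm_neg]
  refine (norm_sub_le _ _).trans (add_le_add ?_ ?_)
  · refine (ctri_norm (wnon_norm ε t) _ _ _).trans ?_
    gcongr
  · refine (ctri_norm (wnon_norm ε 0) _ _ _).trans ?_
    gcongr

end connect

/-- **Well-posedness and uniform bounds for the corrector system (Lemma 3.4).**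
Given `T > 0` and `(a_j) ∈ C([0,T]; ℓ¹(ℤ))`, for every `ε ∈ (0,1]` the linear
corrector system has a unique solution `(b_j^ε) ∈ C([0,T]; ℓ¹(ℤ))`; moreover the
solutions are bounded in `C([0,T]; ℓ¹)` uniformly in `ε ∈ (0,1]`. -/
theorem corrector_system_wellposedness (T : ℝ) (hT : 0 < T)
    (a : ℝ → lp (fun _ : ℤ => ℂ) 1) (ha : ContinuousOn a (Set.Icc 0 T)) :
    ∃ B : ℝ → ℝ → lp (fun _ : ℤ => ℂ) 1,
      (∀ ε ∈ Set.Ioc (0 : ℝ) 1,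
        (ContinuousOn (B ε) (Set.Icc 0 T) ∧ SolvesCorrector T ε a (B ε)) ∧
        ∀ b : ℝ → lp (fun _ : ℤ => ℂ) 1,
          ContinuousOn b (Set.Icc 0 T) → SolvesCorrector T ε a b →
          ∀ t ∈ Set.Icc (0 : ℝ) T, b t = B ε t) ∧
      ∃ C : ℝ, ∀ ε ∈ Set.Ioc (0 : ℝ) 1, ∀ t ∈ Set.Icc (0 : ℝ) T, ‖B ε t‖ ≤ C := by
  obtain ⟨A, hA⟩ := isCompact_Icc.exists_bound_of_continuousOn ha
  have hM : 0 ≤ 3 * A ^ 2 := by positivity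
  have hbd : ∀ τ ∈ Icc 0 T, ∀ x, ‖cG (a τ) x‖ ≤ (3 * A ^ 2) * ‖x‖ := by
    intro τ hτ x
    refine (cG_norm _ _).trans ?_
    have := hA τ hτ
    gcongr
  have hc := cG_cont hT.le ha
  have hex := fun ε : ℝ => volt_exists (G := fun τ => cG (a τ)) hT.le hbd hM hc
    (cF_cont ε hT.le ha) (cF_norm ε hT.le hA)
  choose B hB1 hB2 hB3 using hex
  refine ⟨B, fun ε _ => ⟨⟨hB1 ε, (solves_iff ha (hB1 ε)).mpr (hB2 ε)⟩, ?_⟩, _,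
    fun ε _ => hB3 ε⟩
  intro b hb hs
  exact volt_unique (G := fun τ => cG (a τ)) hbd hM hc hb (hB1 ε) ((solves_iff ha hb).mp hs) (hB2 ε)
end
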